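/- Let μ < 0 and α ∈ (0, 1). For every ε > 0 with ε^{1−α}/(1−α) < −μ there exists a unique u_ε ∈ ℝ satisfying μ + ∫₀^ε e^{u_ε x} x^{−α} dx = 0, and this u_ε is strictly positive. Moreover, there exist constants 0 < c ≤ C and ε₀ ∈ (0, 1) such that for all 0 < ε ≤ ε₀: c |log ε| ≤ ε u_ε ≤ C |log ε|, and c ε^{−1} |log ε| ≤ −(u_ε μ + ∫₀^ε (e^{u_ε x} − 1) x^{−1−α} dx) ≤ C ε^{−1} |log ε|. -/

import Mathlib

open MeasureTheory Real Set

lemma integrableOn_exp_mul_rpow_neg {α ε : ℝ} (hα : α < 1) (hε : 0 ≤ ε) (u : ℝ) :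
    IntegrableOn (fun x : ℝ => exp (u * x) * x ^ (-α)) (Ioc 0 ε) := by
  rw [← intervalIntegrable_iff_integrableOn_Ioc_of_le hε]
  exact (intervalIntegral.intervalIntegrable_rpow' (by linarith)).continuousOn_mul
    (by fun_prop)

lemma integrableOn_Ioc_rpow_neg {α ε : ℝ} (hα : α < 1) (hε : 0 ≤ ε) :
    IntegrableOn (fun x : ℝ => x ^ (-α)) (Ioc 0 ε) := by
  simpa using integrableOn_exp_mul_rpow_neg hα hε 0

lemma setIntegral_Ioc_rpow_neg {α ε : ℝ} (hα : α < 1) (hε : 0 ≤ ε) :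
    ∫ x in Ioc (0 : ℝ) ε, x ^ (-α) = ε ^ (1 - α) / (1 - α) := by
  rw [← intervalIntegral.integral_of_le hε, integral_rpow (Or.inl (by linarith)),
    neg_add_eq_sub, zero_rpow (by linarith), sub_zero]

lemma strictMono_setIntegral_exp_mul_rpow_neg {α ε : ℝ} (hα : α < 1) (hε : 0 < ε) :
    StrictMono fun u : ℝ => ∫ x in Ioc (0 : ℝ) ε, exp (u * x) * x ^ (-α) := by
  intro u v huv
  have hu := integrableOn_exp_mul_rpow_neg hα hε.le u
  have hv := integrableOn_exp_mul_rpow_neg hα hε.le v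
  rw [← sub_pos, ← integral_sub hv hu, ← intervalIntegral.integral_of_le hε.le]
  refine intervalIntegral.intervalIntegral_pos_of_pos_on
    ((intervalIntegrable_iff_integrableOn_Ioc_of_le hε.le).2 (hv.sub hu)) (fun x hx => ?_) hε
  rw [← sub_mul]
  have : exp (u * x) < exp (v * x) := exp_lt_exp.2 (mul_lt_mul_of_pos_right huv hx.1)
  exact mul_pos (sub_pos.2 this) (rpow_pos_of_pos hx.1 _)

lemma continuousOn_setIntegral_exp_mul_rpow_neg {α ε : ℝ} (hα : α < 1) (hε : 0 ≤ ε) (U : ℝ) :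
    ContinuousOn (fun u : ℝ => ∫ x in Ioc (0 : ℝ) ε, exp (u * x) * x ^ (-α)) (Icc 0 U) := by
  refine continuousOn_of_dominated (bound := fun x => exp (U * x) * x ^ (-α))
    (fun u _ => (integrableOn_exp_mul_rpow_neg hα hε u).aestronglyMeasurable) (fun u hu => ?_)
    (integrableOn_exp_mul_rpow_neg hα hε U) (.of_forall fun x => by fun_prop)
  filter_upwards [ae_restrict_mem measurableSet_Ioc] with x hx
  have hx' := rpow_nonneg hx.1.le (-α)
  rw [norm_of_nonneg (by positivity)]
  have := hx.1.le
  have := hu.2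
  gcongr

lemma setIntegral_exp_mul_rpow_neg_le {α ε u : ℝ} (hα : α < 1) (hε : 0 ≤ ε) (hu : 0 ≤ u) :
    ∫ x in Ioc (0 : ℝ) ε, exp (u * x) * x ^ (-α) ≤ exp (ε * u) * (ε ^ (1 - α) / (1 - α)) := by
  rw [← setIntegral_Ioc_rpow_neg hα hε, ← integral_const_mul]
  refine setIntegral_mono_on (integrableOn_exp_mul_rpow_neg hα hε u)
    ((integrableOn_Ioc_rpow_neg hα hε).const_mul _) measurableSet_Ioc fun x hx => ?_
  have hx' := rpow_nonneg hx.1.le (-α)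
  have := hx.2
  rw [mul_comm ε u]
  gcongr

lemma le_setIntegral_exp_mul_rpow_neg {α ε u : ℝ} (hα₀ : 0 ≤ α) (hα : α < 1) (hε : 0 < ε)
    (hu : 0 ≤ u) :
    exp (ε * u / 2) * (ε ^ (1 - α) / 2) ≤
      ∫ x in Ioc (0 : ℝ) ε, exp (u * x) * x ^ (-α) := by
  have hint := integrableOn_exp_mul_rpow_neg hα hε.le u
  have hsub : Ioc (ε / 2) ε ⊆ Ioc 0 ε := Ioc_subset_Ioc_left (by positivity)
  calc exp (ε * u / 2) * (ε ^ (1 - α) / 2)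
      = ∫ _ in Ioc (ε / 2) ε, exp (ε * u / 2) * ε ^ (-α) := by
        rw [setIntegral_const, measureReal_def, volume_Ioc,
          ENNReal.toReal_ofReal (by linarith), smul_eq_mul,
          sub_eq_add_neg, rpow_add hε, rpow_one]
        ring
    _ ≤ ∫ x in Ioc (ε / 2) ε, exp (u * x) * x ^ (-α) := by
        refine setIntegral_mono_on (integrableOn_const (by simp)) (hint.mono_set hsub)
          measurableSet_Ioc fun x hx => ?_
        have hx₀ : 0 < x := (hsub hx).1
        gcongr ?_ * ?_
        · exact exp_le_exp.2 (by nlinarith [hx.1])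
        · exact rpow_le_rpow_of_nonpos hx₀ hx.2 (by linarith)
    _ ≤ _ := by
        refine setIntegral_mono_set hint ?_ hsub.eventuallyLE
        filter_upwards [ae_restrict_mem measurableSet_Ioc] with x hx
        have hx' := rpow_nonneg hx.1.le (-α)
        simp only [Pi.zero_apply]
        positivity

lemma exists_setIntegral_exp_mul_rpow_neg_eq {α ε m : ℝ} (hα₀ : 0 ≤ α) (hα : α < 1)
    (hε : 0 < ε) (hm : ε ^ (1 - α) / (1 - α) ≤ m) :
    ∃ u : ℝ, ∫ x in Ioc (0 : ℝ) ε, exp (u * x) * x ^ (-α) = m := by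
  have hp : 0 < ε ^ (1 - α) := rpow_pos_of_pos hε _
  have hm₀ : 0 ≤ m := le_trans (div_nonneg hp.le (by linarith)) hm
  set U : ℝ := 2 / ε * (m * 2 / ε ^ (1 - α)) with hU
  have hU₀ : 0 ≤ U := by positivity
  have hmem : m ∈ Icc (∫ x in Ioc (0 : ℝ) ε, exp (0 * x) * x ^ (-α))
      (∫ x in Ioc (0 : ℝ) ε, exp (U * x) * x ^ (-α)) := by
    constructor
    · simpa [setIntegral_Ioc_rpow_neg hα hε.le] using hm
    · refine le_trans ?_ (le_setIntegral_exp_mul_rpow_neg hα₀ hα hε hU₀)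
      have h := add_one_le_exp (ε * U / 2)
      have hUeq : ε * U / 2 * (ε ^ (1 - α) / 2) = m := by rw [hU]; field_simp
      nlinarith
  obtain ⟨u, -, hu⟩ := intermediate_value_Icc hU₀
    (continuousOn_setIntegral_exp_mul_rpow_neg hα hε.le U) hmem
  exact ⟨u, hu⟩

lemma exp_sub_one_le_mul_exp_half_add {t : ℝ} (ht : 0 ≤ t) :
    exp t - 1 ≤ t * exp t / 2 + exp 2 * t := by
  have he := exp_pos t
  have he2 := exp_pos 2
  rcases le_total t 2 with h | h
  · have h1 : exp t ≤ exp 2 := exp_le_exp.2 h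
    have h2 : 1 - t ≤ exp (-t) := by linarith [add_one_le_exp (-t)]
    have h3 : exp (-t) * exp t = 1 := by rw [← exp_add]; simp
    nlinarith [mul_le_mul_of_nonneg_right h2 he.le, mul_le_mul_of_nonneg_left h1 ht,
      mul_nonneg ht he.le]
  · nlinarith [mul_nonneg he2.le ht]

lemma setIntegral_exp_sub_one_mul_rpow_nonneg {α ε u : ℝ} (hu : 0 ≤ u) :
    0 ≤ ∫ x in Ioc (0 : ℝ) ε, (exp (u * x) - 1) * x ^ (-(1 + α)) := by
  refine setIntegral_nonneg measurableSet_Ioc fun x hx => ?_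
  exact mul_nonneg (sub_nonneg.2 (one_le_exp (mul_nonneg hu hx.1.le))) (rpow_nonneg hx.1.le _)

lemma setIntegral_exp_sub_one_mul_rpow_le {α ε u : ℝ} (hα : α < 1) (hε : 0 ≤ ε) (hu : 0 ≤ u) :
    ∫ x in Ioc (0 : ℝ) ε, (exp (u * x) - 1) * x ^ (-(1 + α)) ≤
      u / 2 * (∫ x in Ioc (0 : ℝ) ε, exp (u * x) * x ^ (-α)) +
        exp 2 * u * (ε ^ (1 - α) / (1 - α)) := by
  have hint₁ := (integrableOn_exp_mul_rpow_neg hα hε u).const_mul (u / 2)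
  have hint₂ := (integrableOn_Ioc_rpow_neg hα hε).const_mul (exp 2 * u)
  rw [← setIntegral_Ioc_rpow_neg hα hε, ← integral_const_mul, ← integral_const_mul,
    ← integral_add hint₁ hint₂]
  refine integral_mono_of_nonneg ?_ (hint₁.add hint₂) ?_
  · filter_upwards [ae_restrict_mem measurableSet_Ioc] with x hx
    exact mul_nonneg (sub_nonneg.2 (one_le_exp (mul_nonneg hu hx.1.le)))
      (rpow_nonneg hx.1.le _)
  · filter_upwards [ae_restrict_mem measurableSet_Ioc] with x hx
    have hpow : x ^ (-α) = x * x ^ (-(1 + α)) := by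
      rw [show -α = 1 + -(1 + α) by ring, rpow_add hx.1, rpow_one]
    have h := mul_le_mul_of_nonneg_right
      (exp_sub_one_le_mul_exp_half_add (mul_nonneg hu hx.1.le))
      (rpow_nonneg hx.1.le (-(1 + α)))
    refine h.trans_eq ?_
    simp only [hpow]
    ring

/-- All smallness requirements on `ε` hold up to some threshold below `1`. -/
lemma exists_small_threshold {a : ℝ} (ha : 0 < a) (A : ℝ) {B : ℝ} (hB : 0 < B) :
    ∃ ε₀ : ℝ, 0 < ε₀ ∧ ε₀ < 1 ∧ ∀ ε, 0 < ε → ε ≤ ε₀ → A ≤ -log ε ∧ ε ^ a ≤ B := by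
  refine ⟨min (exp (-|A| - 1)) (B ^ a⁻¹), by positivity, ?_, fun ε hε hle => ⟨?_, ?_⟩⟩
  · exact (min_le_left _ _).trans_lt (exp_lt_one_iff.2 (by linarith [abs_nonneg A]))
  · have := (log_le_iff_le_exp hε).2 (hle.trans (min_le_left _ _))
    linarith [le_abs_self A]
  · have := rpow_le_rpow hε.le (hle.trans (min_le_right _ _)) ha.le
    rwa [rpow_inv_rpow hB.le ha.ne'] at this

/-- The analytic core of Example 2.3 of the paper (α-stable subordinator with negative
drift `μ`): for small `ε` the Esscher equation `μ + ∫₀^ε e^{u x} x^{−α} dx = 0` has a unique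
solution `u_ε`, which is positive, and it satisfies `ε u_ε ≈ |log ε|` as well as
`−Λ_ε(u_ε) ≈ ε⁻¹ |log ε|`, where `Λ_ε(u) = uμ + ∫₀^ε (e^{ux} − 1) x^{−1−α} dx`. -/
theorem stmt_19 (μ : ℝ) (hμ : μ < 0) (α : ℝ) (hα : α ∈ Ioo (0 : ℝ) 1) :
    ((∀ ε : ℝ, 0 < ε → ε ^ (1 - α) / (1 - α) < -μ →
        (∃! u : ℝ, μ + ∫ x in Ioc (0 : ℝ) ε, Real.exp (u * x) * x ^ (-α) = 0) ∧
        (∀ u : ℝ, μ + ∫ x in Ioc (0 : ℝ) ε, Real.exp (u * x) * x ^ (-α) = 0 → 0 < u))) ∧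
    ∃ c C ε₀ : ℝ, 0 < c ∧ c ≤ C ∧ 0 < ε₀ ∧ ε₀ < 1 ∧
      ∀ ε u : ℝ, 0 < ε → ε ≤ ε₀ →
        μ + ∫ x in Ioc (0 : ℝ) ε, Real.exp (u * x) * x ^ (-α) = 0 →
          (c * |Real.log ε| ≤ ε * u ∧ ε * u ≤ C * |Real.log ε|) ∧
          (c * ε⁻¹ * |Real.log ε|
              ≤ -(u * μ + ∫ x in Ioc (0 : ℝ) ε, (Real.exp (u * x) - 1) * x ^ (-(1 + α))) ∧
            -(u * μ + ∫ x in Ioc (0 : ℝ) ε, (Real.exp (u * x) - 1) * x ^ (-(1 + α)))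
              ≤ C * ε⁻¹ * |Real.log ε|) := by
  obtain ⟨hα₀, hα₁⟩ := hα
  have ha : 0 < 1 - α := by linarith
  have hm : 0 < -μ := by linarith
  have hpos : ∀ ε u : ℝ, 0 < ε → ε ^ (1 - α) / (1 - α) < -μ →
      μ + ∫ x in Ioc (0 : ℝ) ε, exp (u * x) * x ^ (-α) = 0 → 0 < u := by
    intro ε u hε hlt hu
    refine (strictMono_setIntegral_exp_mul_rpow_neg hα₁ hε).lt_iff_lt.1 ?_
    simp only [zero_mul, exp_zero, one_mul, setIntegral_Ioc_rpow_neg hα₁ hε.le]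
    linarith
  refine ⟨fun ε hε hlt => ⟨?_, fun u => hpos ε u hε hlt⟩, ?_⟩
  · obtain ⟨u, hu⟩ := exists_setIntegral_exp_mul_rpow_neg_eq hα₀.le hα₁ hε hlt.le
    refine ⟨u, by simp only [hu]; ring, fun v hv => ?_⟩
    exact (strictMono_setIntegral_exp_mul_rpow_neg hα₁ hε).injective
      (by simp only [hu]; linarith)
  obtain ⟨ε₀, hε₀, hε₀', hsmall⟩ := exists_small_threshold ha
    (max (-log (-μ * (1 - α)) / ((1 - α) / 2)) (log (2 * -μ)))
    (B := -μ / 4 * (1 - α) / exp 2) (by positivity)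
  refine ⟨min ((1 - α) / 2) (-μ * (1 - α) / 8), max 4 (4 * -μ), ε₀, by positivity, ?_,
    hε₀, hε₀', fun ε u hε hle hu => ?_⟩
  · exact (min_le_left _ _).trans (le_trans (by linarith) (le_max_left _ _))
  obtain ⟨hlog, hpow⟩ := hsmall ε hε hle
  have hlogA := (div_le_iff₀ (by positivity)).1 ((le_max_left _ _).trans hlog)
  have hlogB := (le_max_right _ _).trans hlog
  have hL : 0 < -log ε := by linarith [log_neg hε (hle.trans_lt hε₀')]
  rw [abs_of_neg (by linarith)]
  set L := -log ε with hLdef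
  have hpε : 0 < ε ^ (1 - α) := rpow_pos_of_pos hε _
  have hq : exp 2 * (ε ^ (1 - α) / (1 - α)) ≤ -μ / 4 := by
    rw [le_div_iff₀ (exp_pos 2)] at hpow
    rw [← mul_div_assoc, div_le_iff₀ ha]
    linarith
  have hu₀ : 0 < u := by
    refine hpos ε u hε ?_ hu
    have : 0 < ε ^ (1 - α) / (1 - α) := by positivity
    nlinarith [one_le_exp (show (0 : ℝ) ≤ 2 by norm_num)]
  have hF : ∫ x in Ioc (0 : ℝ) ε, exp (u * x) * x ^ (-α) = -μ := by linarith
  have hlower : (1 - α) / 2 * L ≤ ε * u := by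
    have h := setIntegral_exp_mul_rpow_neg_le hα₁ hε.le hu₀.le
    rw [hF, ← mul_div_assoc, le_div_iff₀ ha] at h
    have h' := log_le_log (by positivity) h
    rw [log_mul (exp_pos _).ne' hpε.ne', log_exp, log_rpow hε] at h'
    linarith
  have hupper : ε * u ≤ 4 * L := by
    have h := le_setIntegral_exp_mul_rpow_neg hα₀.le hα₁ hε hu₀.le
    rw [hF] at h
    have h' := log_le_log (by positivity)
      (show exp (ε * u / 2) * ε ^ (1 - α) ≤ 2 * -μ by linarith)
    rw [log_mul (exp_pos _).ne' hpε.ne', log_exp, log_rpow hε] at h'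
    nlinarith
  have hG₀ := setIntegral_exp_sub_one_mul_rpow_nonneg (α := α) (ε := ε) hu₀.le
  have hG := setIntegral_exp_sub_one_mul_rpow_le hα₁ hε.le hu₀.le
  rw [hF] at hG
  set G := ∫ x in Ioc (0 : ℝ) ε, (exp (u * x) - 1) * x ^ (-(1 + α))
  have huε : u = ε⁻¹ * (ε * u) := by field_simp
  refine ⟨⟨?_, ?_⟩, ?_, ?_⟩
  · exact (mul_le_mul_of_nonneg_right (min_le_left _ _) hL.le).trans hlower
  · exact hupper.trans (mul_le_mul_of_nonneg_right (le_max_left _ _) hL.le)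
  · calc _ ≤ -μ * (1 - α) / 8 * ε⁻¹ * L := by gcongr; exact min_le_right _ _
      _ = -μ / 4 * (ε⁻¹ * ((1 - α) / 2 * L)) := by ring
      _ ≤ -μ / 4 * (ε⁻¹ * (ε * u)) := by gcongr
      _ = -μ / 4 * u := by rw [← huε]
      _ ≤ _ := by nlinarith
  · calc -(u * μ + G) ≤ -μ * u := by linarith
      _ = -μ * (ε⁻¹ * (ε * u)) := by rw [← huε]
      _ ≤ -μ * (ε⁻¹ * (4 * L)) := by gcongr
      _ = 4 * -μ * ε⁻¹ * L := by ring
      _ ≤ _ := by gcongr; exact le_max_right _ _
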